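/- Let U₁ ∈ ℝ^{m₁×N₁} and U₂ ∈ ℝ^{m₂×N₂} satisfy the null space property of order k (NSP_k), with k ≤ N₁ and k ≤ N₂. Then the map X ↦ U₁XU₂ᵀ is injective on the set of k-sparse matrices: if X, Z ∈ ℝ^{N₁×N₂} are both k-sparse and U₁XU₂ᵀ = U₁ZU₂ᵀ, then X = Z. -/

import Mathlib

/-!
Put `D = X - Z`, so that `U₁ * D * U₂ᵀ = 0`. The null space property of order `k` forces a kernel
vector supported on a union of two sets of size at most `k` to vanish
(`NSP.eq_zero_of_support_union`). The nonzero rows of `D` lie in the union of those of `X` and `Z`,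
which number at most `k` each, and likewise for columns. Each column of `D * U₂ᵀ` is a kernel vector
of `U₁` supported on the nonzero rows of `D`, so `D * U₂ᵀ = 0`; then each row of `D` is a kernel
vector of `U₂` supported on the nonzero columns of `D`, so `D = 0`.
-/

open Matrix Finset

/-- A matrix `X` is `k`-sparse if it has at most `k` nonzero entries in total. -/
def SparseMat {N₁ N₂ : ℕ} (k : ℕ) (X : Matrix (Fin N₁) (Fin N₂) ℝ) : Prop :=
  (Finset.univ.filter fun p : Fin N₁ × Fin N₂ => X p.1 p.2 ≠ 0).card ≤ k

/-- `A` satisfies the null space property of order `k`. -/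
def NSP {m N : ℕ} (k : ℕ) (A : Matrix (Fin m) (Fin N) ℝ) : Prop :=
  ∀ w : Fin N → ℝ, w ≠ 0 → A.mulVec w = 0 →
    ∀ S : Finset (Fin N), S.card = k →
      ∑ i ∈ S, |w i| < ∑ i ∈ Sᶜ, |w i|

/-- After enlarging `S` and `T` to size exactly `k`, the null space property would give
`‖w_S‖₁ < ‖w_{Sᶜ}‖₁ ≤ ‖w_T‖₁ < ‖w_{Tᶜ}‖₁ ≤ ‖w_S‖₁` if `w` were nonzero. -/
lemma NSP.eq_zero_of_support_union {m N k : ℕ} (hk : k ≤ N) {A : Matrix (Fin m) (Fin N) ℝ}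
    (hA : NSP k A) {w : Fin N → ℝ} (hw : A.mulVec w = 0) {S T : Finset (Fin N)}
    (hS : S.card ≤ k) (hT : T.card ≤ k) (hST : ∀ i, i ∉ S → i ∉ T → w i = 0) : w = 0 := by
  by_contra hne
  obtain ⟨S', hSS', hS'⟩ := Finset.exists_superset_card_eq hS (by simpa using hk)
  obtain ⟨T', hTT', hT'⟩ := Finset.exists_superset_card_eq hT (by simpa using hk)
  have key : ∀ P Q : Finset (Fin N), (∀ i, i ∉ P → i ∉ Q → w i = 0) →
      ∑ i ∈ Pᶜ, |w i| ≤ ∑ i ∈ Q, |w i| := by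
    intro P Q h
    calc ∑ i ∈ Pᶜ, |w i| ≤ ∑ i ∈ Pᶜ ∪ Q, |w i| :=
          Finset.sum_le_sum_of_subset_of_nonneg Finset.subset_union_left
            fun i _ _ => abs_nonneg _
      _ = ∑ i ∈ Q, |w i| := by
          refine (Finset.sum_subset Finset.subset_union_right fun i hi hQ => ?_).symm
          have hP : i ∉ P := by simpa [hQ] using hi
          rw [h i hP hQ, abs_zero]
  have h1 := hA w hne hw S' hS'
  have h2 := hA w hne hw T' hT'
  have h3 := key S' T' fun i hi hj => hST i (fun h => hi (hSS' h)) (fun h => hj (hTT' h))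
  have h4 := key T' S' fun i hi hj => hST i (fun h => hj (hSS' h)) (fun h => hi (hTT' h))
  linarith

lemma SparseMat.exists_rows {N₁ N₂ k : ℕ} {X : Matrix (Fin N₁) (Fin N₂) ℝ} (hX : SparseMat k X) :
    ∃ R : Finset (Fin N₁), R.card ≤ k ∧ ∀ i, i ∉ R → ∀ j, X i j = 0 := by
  refine ⟨_, (Finset.card_image_le (f := Prod.fst)).trans hX, fun i hi j => ?_⟩
  by_contra h
  exact hi (Finset.mem_image.mpr ⟨(i, j), by simpa using h, rfl⟩)

lemma SparseMat.exists_cols {N₁ N₂ k : ℕ} {X : Matrix (Fin N₁) (Fin N₂) ℝ} (hX : SparseMat k X) :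
    ∃ C : Finset (Fin N₂), C.card ≤ k ∧ ∀ j, j ∉ C → ∀ i, X i j = 0 := by
  refine ⟨_, (Finset.card_image_le (f := Prod.snd)).trans hX, fun j hj i => ?_⟩
  by_contra h
  exact hj (Finset.mem_image.mpr ⟨(i, j), by simpa using h, rfl⟩)

theorem stmt_7 {m₁ m₂ N₁ N₂ k : ℕ} (hk₁ : k ≤ N₁) (hk₂ : k ≤ N₂)
    (U₁ : Matrix (Fin m₁) (Fin N₁) ℝ) (U₂ : Matrix (Fin m₂) (Fin N₂) ℝ)
    (hU₁ : NSP k U₁) (hU₂ : NSP k U₂)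
    (X Z : Matrix (Fin N₁) (Fin N₂) ℝ) (hX : SparseMat k X) (hZ : SparseMat k Z)
    (h : U₁ * X * U₂ᵀ = U₁ * Z * U₂ᵀ) : X = Z := by
  obtain ⟨R, hR, hXR⟩ := hX.exists_rows
  obtain ⟨R', hR', hZR⟩ := hZ.exists_rows
  obtain ⟨C, hC, hXC⟩ := hX.exists_cols
  obtain ⟨C', hC', hZC⟩ := hZ.exists_cols
  have hD : U₁ * ((X - Z) * U₂ᵀ) = 0 := by
    rw [← Matrix.mul_assoc, Matrix.mul_sub, Matrix.sub_mul, h, sub_self]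
  have hDU : (X - Z) * U₂ᵀ = 0 := by
    ext i j
    refine congrFun (hU₁.eq_zero_of_support_union hk₁
      (w := fun i => ((X - Z) * U₂ᵀ) i j) ?_ hR hR' fun i hi hi' => ?_) i
    · funext a
      exact congrFun (congrFun hD a) j
    · simp [Matrix.mul_apply, hXR i hi, hZR i hi']
  rw [← sub_eq_zero]
  ext i j
  refine congrFun (hU₂.eq_zero_of_support_union hk₂
    (w := fun j => (X - Z) i j) ?_ hC hC' fun j hj hj' => ?_) j
  · funext b
    have := congrFun (congrFun hDU i) b
    simpa [Matrix.mul_apply, Matrix.mulVec, dotProduct, mul_comm] using this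
  · simp [hXC j hj, hZC j hj']
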